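/- arXiv:quant-ph/0309186 — 2 statements merged into one kernel-verified Lean document; each statement's English description precedes it below -/
import Mathlib

section
/- For any pure three-qutrit state, with λ_1^{(a)} ≤ λ_2^{(a)} ≤ λ_3^{(a)} the increasingly ordered eigenvalues of the a-th one-particle reduced density matrix, the inequality 2λ_2^{(a)} + λ_3^{(a)} ≤ 2λ_2^{(b)} + λ_1^{(b)} + 2λ_2^{(c)} + λ_3^{(c)} holds for every permutation (a,b,c) of (1,2,3). -/
open scoped BigOperators

/-- The one-particle reduced density matrix of the first qutrit. -/
noncomputable def rho1 (c : Fin 3 → Fin 3 → Fin 3 → ℂ) : Matrix (Fin 3) (Fin 3) ℂ :=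
  Matrix.of fun i i' => ∑ j : Fin 3, ∑ k : Fin 3, c i j k * (starRingEnd ℂ) (c i' j k)

/-- The one-particle reduced density matrix of the second qutrit. -/
noncomputable def rho2 (c : Fin 3 → Fin 3 → Fin 3 → ℂ) : Matrix (Fin 3) (Fin 3) ℂ :=
  Matrix.of fun j j' => ∑ i : Fin 3, ∑ k : Fin 3, c i j k * (starRingEnd ℂ) (c i j' k)

/-- The one-particle reduced density matrix of the third qutrit. -/
noncomputable def rho3 (c : Fin 3 → Fin 3 → Fin 3 → ℂ) : Matrix (Fin 3) (Fin 3) ℂ :=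
  Matrix.of fun k k' => ∑ i : Fin 3, ∑ j : Fin 3, c i j k * (starRingEnd ℂ) (c i j k')

/-- `l` lists the eigenvalues of the Hermitian matrix `M` in increasing order. -/
def IsOrderedSpectrum (M : Matrix (Fin 3) (Fin 3) ℂ) (l : Fin 3 → ℝ) : Prop :=
  Monotone l ∧ ∃ hM : M.IsHermitian, ∃ σ : Equiv.Perm (Fin 3),
    ∀ i, l i = hM.eigenvalues (σ i)

/-!
The overlap `T x y z = ⟨ψ, x ⊗ y ⊗ z⟩` of the state with product vectors is trilinear, and the sum
of `‖T x y z‖²` over orthonormal bases of `y` and `z` is the expectation value `⟨x, ρ x⟩` of the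
first reduced density matrix. By counting dimensions one finds orthonormal bases `e`, `f`, `g`, with
`e 0` the lowest eigenvector of the first matrix, `f 0` the highest one of the second, and `g 2`
orthogonal to the highest one of the third, such that `T (e i) (f j) (g k) = 0` whenever
`j + k < i`. Hence `i ≤ j + k` on the support of the state, and taking expectation values,
`∑ i ⟨e i, ρ₁ e i⟩ ≤ ∑ j ⟨f j, ρ₂ f j⟩ + ∑ k ⟨g k, ρ₃ g k⟩`. Variational bounds compare the three
sums with `2 λ₂ + λ₃`, `2 λ₂ + λ₁` and `2 λ₂ + λ₃`.
-/

open Module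
open scoped InnerProductSpace

section UnitVectors

variable {𝕜 E F : Type*} [RCLike 𝕜] [NormedAddCommGroup E] [InnerProductSpace 𝕜 E]

theorem exists_norm_eq_one_and_map_eq_zero [AddCommGroup F] [Module 𝕜 F] [FiniteDimensional 𝕜 F]
    (L : E →ₗ[𝕜] F) (h : finrank 𝕜 F < finrank 𝕜 E) : ∃ x, ‖x‖ = 1 ∧ L x = 0 := by
  have : FiniteDimensional 𝕜 E := .of_finrank_pos (by lia)
  obtain ⟨x, hx, hx0⟩ :=
    Submodule.exists_mem_ne_zero_of_ne_bot (LinearMap.ker_ne_bot_of_finrank_lt h)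
  refine ⟨(‖x‖⁻¹ : 𝕜) • x, norm_smul_inv_norm hx0, ?_⟩
  rw [map_smul, LinearMap.mem_ker.1 hx, smul_zero]

theorem exists_norm_eq_one_and_inner_eq_zero_and_map_eq_zero (hE : 2 < finrank 𝕜 E) (w : E)
    (p : E →ₗ[𝕜] 𝕜) : ∃ x, ‖x‖ = 1 ∧ ⟪w, x⟫_𝕜 = 0 ∧ p x = 0 := by
  obtain ⟨x, hx, hpx⟩ :=
    exists_norm_eq_one_and_map_eq_zero ((innerₛₗ 𝕜 w).prod p) (by simpa using hE)
  exact ⟨x, hx, by simpa using hpx⟩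

theorem exists_orthonormalBasis_extending_pair {ι : Type*} [Fintype ι]
    (hE : finrank 𝕜 E = Fintype.card ι) {s t : ι} (hst : s ≠ t) {x y : E}
    (hx : ‖x‖ = 1) (hy : ‖y‖ = 1) (hxy : ⟪x, y⟫_𝕜 = 0) :
    ∃ b : OrthonormalBasis ι 𝕜 E, b s = x ∧ b t = y := by
  classical
  have : Nonempty ι := ⟨s⟩
  have : FiniteDimensional 𝕜 E := .of_finrank_pos (hE ▸ Fintype.card_pos)
  have hyx : ⟪y, x⟫_𝕜 = 0 := inner_eq_zero_symm.1 hxy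
  have horth : Orthonormal 𝕜 (({s, t} : Set ι).domRestrict fun i => if i = s then x else y) := by
    constructor
    · rintro ⟨i, rfl | rfl⟩ <;> simp [hst.symm, hx, hy]
    · rintro ⟨i, rfl | rfl⟩ ⟨j, rfl | rfl⟩ hij <;> simp_all [hst.symm]
  obtain ⟨b, hb⟩ := horth.exists_orthonormalBasis_extension_of_card_eq hE
  exact ⟨b, by simp [hb], by simp [hb, hst.symm]⟩

end UnitVectors

section Diagonal

variable {𝕜 E ι : Type*} [RCLike 𝕜] [NormedAddCommGroup E] [InnerProductSpace 𝕜 E] [Fintype ι]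

/-- The real-valued quadratic form `q` is diagonal in the orthonormal basis `v`, with diagonal
entries `l`. For the form `x ↦ ⟪x, T x⟫` of a self-adjoint operator this says that `v` is a basis
of eigenvectors of `T` with eigenvalues `l`. -/
def IsDiagonalIn (q : E → ℝ) (v : OrthonormalBasis ι 𝕜 E) (l : ι → ℝ) : Prop :=
  ∀ x, q x = ∑ i, l i * ‖⟪v i, x⟫_𝕜‖ ^ 2

theorem isDiagonalIn_re_inner_of_apply_eq_smul {T : E →ₗ[𝕜] E} {v : OrthonormalBasis ι 𝕜 E}
    {l : ι → ℝ} (hT : ∀ i, T (v i) = (l i : 𝕜) • v i) :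
    IsDiagonalIn (fun x => RCLike.re ⟪x, T x⟫_𝕜) v l := by
  intro x
  have hTx : T x = ∑ i, ⟪v i, x⟫_𝕜 • (l i : 𝕜) • v i := by
    conv_lhs => rw [← v.sum_repr' x]
    simp only [map_sum, map_smul, hT]
  simp only [hTx, inner_sum, inner_smul_right, map_sum]
  refine Finset.sum_congr rfl fun i _ => ?_
  rw [mul_left_comm, RCLike.re_ofReal_mul, inner_mul_symm_re_eq_norm, norm_mul, norm_inner_symm x,
    ← pow_two]

namespace IsDiagonalIn

variable {q : E → ℝ} {v : OrthonormalBasis ι 𝕜 E} {l : ι → ℝ}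

theorem apply_basis (h : IsDiagonalIn q v l) (i : ι) : q (v i) = l i := by
  classical
  simp [h (v i), v.inner_eq_ite, apply_ite]

theorem sum_apply_orthonormalBasis (h : IsDiagonalIn q v l) {κ : Type*} [Fintype κ]
    (e : OrthonormalBasis κ 𝕜 E) : ∑ m, q (e m) = ∑ i, l i := by
  simp only [h _]
  rw [Finset.sum_comm]
  simp only [← Finset.mul_sum, e.sum_sq_norm_inner_left, v.norm_eq_one, one_pow, mul_one]

theorem mul_sq_norm_le (h : IsDiagonalIn q v l) {μ : ℝ} {x : E}
    (hx : ∀ i, ⟪v i, x⟫_𝕜 = 0 ∨ μ ≤ l i) : μ * ‖x‖ ^ 2 ≤ q x := by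
  rw [h x, ← v.sum_sq_norm_inner_right x, Finset.mul_sum]
  refine Finset.sum_le_sum fun i _ => ?_
  rcases hx i with hi | hi
  · simp [hi]
  · gcongr

theorem le_mul_sq_norm (h : IsDiagonalIn q v l) {μ : ℝ} {x : E}
    (hx : ∀ i, ⟪v i, x⟫_𝕜 = 0 ∨ l i ≤ μ) : q x ≤ μ * ‖x‖ ^ 2 := by
  rw [h x, ← v.sum_sq_norm_inner_right x, Finset.mul_sum]
  refine Finset.sum_le_sum fun i _ => ?_
  rcases hx i with hi | hi
  · simp [hi]
  · gcongr

end IsDiagonalIn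

end Diagonal

section DiagonalThree

variable {𝕜 E : Type*} [RCLike 𝕜] [NormedAddCommGroup E] [InnerProductSpace 𝕜 E]

namespace IsDiagonalIn

variable {q : E → ℝ} {v e : OrthonormalBasis (Fin 3) 𝕜 E} {l : Fin 3 → ℝ}

theorem sum_natCast_mul_apply (h : IsDiagonalIn q v l) (b : OrthonormalBasis (Fin 3) 𝕜 E) :
    ∑ i : Fin 3, (i : ℝ) * q (b i) = l 0 + l 1 + l 2 - q (b 0) + q (b 2) := by
  have htrace := h.sum_apply_orthonormalBasis b
  simp only [Fin.sum_univ_three] at htrace ⊢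
  norm_num
  linarith

theorem le_sum_natCast_mul_of_eq_bot (h : IsDiagonalIn q v l) (hl : Monotone l)
    (he : e 0 = v 0) : 2 * l 1 + l 2 ≤ ∑ i : Fin 3, (i : ℝ) * q (e i) := by
  have hlow : q (e 0) = l 0 := by rw [he, h.apply_basis]
  have hhigh : l 1 * ‖e 2‖ ^ 2 ≤ q (e 2) := by
    refine h.mul_sq_norm_le fun i => ?_
    obtain rfl | hi := eq_or_ne i 0
    · exact .inl (by simp [← he, e.inner_eq_ite])
    · exact .inr (hl (by lia))
  rw [e.norm_eq_one] at hhigh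
  rw [h.sum_natCast_mul_apply]
  linarith

theorem apply_le_of_inner_top_eq_zero (h : IsDiagonalIn q v l) (hl : Monotone l) {x : E}
    (hx : ⟪v 2, x⟫_𝕜 = 0) : q x ≤ l 1 * ‖x‖ ^ 2 := by
  refine h.le_mul_sq_norm fun i => ?_
  obtain rfl | hi := eq_or_ne i 2
  · exact .inl hx
  · exact .inr (hl (by lia))

theorem sum_natCast_mul_le_of_eq_top (h : IsDiagonalIn q v l) (hl : Monotone l)
    (he : e 0 = v 2) : ∑ i : Fin 3, (i : ℝ) * q (e i) ≤ 2 * l 1 + l 0 := by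
  have htop : q (e 0) = l 2 := by rw [he, h.apply_basis]
  have hmid : q (e 2) ≤ l 1 * ‖e 2‖ ^ 2 :=
    h.apply_le_of_inner_top_eq_zero hl (by simp [← he, e.inner_eq_ite])
  rw [e.norm_eq_one] at hmid
  rw [h.sum_natCast_mul_apply]
  linarith

theorem sum_natCast_mul_le_of_inner_top_eq_zero (h : IsDiagonalIn q v l) (hl : Monotone l)
    (he : ⟪v 2, e 2⟫_𝕜 = 0) : ∑ i : Fin 3, (i : ℝ) * q (e i) ≤ 2 * l 1 + l 2 := by
  have hlow : l 0 * ‖e 0‖ ^ 2 ≤ q (e 0) :=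
    h.mul_sq_norm_le fun i => .inr (hl (Fin.zero_le i))
  have hmid : q (e 2) ≤ l 1 * ‖e 2‖ ^ 2 := h.apply_le_of_inner_top_eq_zero hl he
  rw [e.norm_eq_one] at hlow hmid
  rw [h.sum_natCast_mul_apply]
  linarith

end IsDiagonalIn

end DiagonalThree

section Trilinear

variable {𝕜 A B C : Type*} [RCLike 𝕜]
  [NormedAddCommGroup A] [InnerProductSpace 𝕜 A]
  [NormedAddCommGroup B] [InnerProductSpace 𝕜 B]
  [NormedAddCommGroup C] [InnerProductSpace 𝕜 C]

theorem sum_sq_norm_apply_orthonormalBasis_eq {ι κ : Type*} [Fintype ι] [Fintype κ]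
    (b : OrthonormalBasis ι 𝕜 A) (b' : OrthonormalBasis κ 𝕜 A) (p : A →ₗ[𝕜] 𝕜) :
    ∑ i, ‖p (b i)‖ ^ 2 = ∑ i, ‖p (b' i)‖ ^ 2 := by
  have : FiniteDimensional 𝕜 A := b.toBasis.finiteDimensional_of_finite
  have : CompleteSpace A := FiniteDimensional.complete 𝕜 A
  have hp (x : A) : p x = ⟪(InnerProductSpace.toDual 𝕜 A).symm p.toContinuousLinearMap, x⟫_𝕜 := by
    simp
  simp only [hp, OrthonormalBasis.sum_sq_norm_inner_left]

/-- The cyclic rotation of a trilinear form which moves its last argument to the front. -/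
def rotate (T : A →ₗ[𝕜] B →ₗ[𝕜] C →ₗ[𝕜] 𝕜) : C →ₗ[𝕜] A →ₗ[𝕜] B →ₗ[𝕜] 𝕜 :=
  (LinearMap.lflip.toLinearMap ∘ₗ T).flip

@[simp]
theorem rotate_apply (T : A →ₗ[𝕜] B →ₗ[𝕜] C →ₗ[𝕜] 𝕜) (x : A) (y : B) (z : C) :
    rotate T z x y = T x y z :=
  rfl

variable [FiniteDimensional 𝕜 B] [FiniteDimensional 𝕜 C]

/-- The quadratic form `x ↦ ⟪x, ρ x⟫` of the reduced density operator `ρ` on the first factor,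
where `T` is the overlap with product vectors. The forms of the other two factors are those of
`T.flip` and `rotate T`. The standard bases are an arbitrary choice, see
`marginalForm_eq_sum`. -/
noncomputable def marginalForm (T : A →ₗ[𝕜] B →ₗ[𝕜] C →ₗ[𝕜] 𝕜) (x : A) : ℝ :=
  ∑ m, ∑ n, ‖T x (stdOrthonormalBasis 𝕜 B m) (stdOrthonormalBasis 𝕜 C n)‖ ^ 2

theorem marginalForm_eq_sum {κ μ : Type*} [Fintype κ] [Fintype μ]
    (T : A →ₗ[𝕜] B →ₗ[𝕜] C →ₗ[𝕜] 𝕜) (f : OrthonormalBasis κ 𝕜 B) (g : OrthonormalBasis μ 𝕜 C)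
    (x : A) : marginalForm T x = ∑ j, ∑ k, ‖T x (f j) (g k)‖ ^ 2 := by
  simp only [marginalForm, sum_sq_norm_apply_orthonormalBasis_eq (stdOrthonormalBasis 𝕜 C) g]
  rw [Finset.sum_comm]
  simp only [← LinearMap.flip_apply (T x),
    sum_sq_norm_apply_orthonormalBasis_eq (stdOrthonormalBasis 𝕜 B) f]
  exact Finset.sum_comm

theorem sum_mul_marginalForm_le_of_support [FiniteDimensional 𝕜 A]
    {ι κ μ : Type*} [Fintype ι] [Fintype κ] [Fintype μ]
    {T : A →ₗ[𝕜] B →ₗ[𝕜] C →ₗ[𝕜] 𝕜} {e : OrthonormalBasis ι 𝕜 A} {f : OrthonormalBasis κ 𝕜 B}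
    {g : OrthonormalBasis μ 𝕜 C} {α : ι → ℝ} {β : κ → ℝ} {γ : μ → ℝ}
    (hT : ∀ i j k, β j + γ k < α i → T (e i) (f j) (g k) = 0) :
    ∑ i, α i * marginalForm T (e i) ≤
      ∑ j, β j * marginalForm T.flip (f j) + ∑ k, γ k * marginalForm (rotate T) (g k) := by
  have hterm (i : ι) (j : κ) (k : μ) :
      α i * ‖T (e i) (f j) (g k)‖ ^ 2 ≤ (β j + γ k) * ‖T (e i) (f j) (g k)‖ ^ 2 := by
    obtain hlt | hle := lt_or_ge (β j + γ k) (α i)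
    · simp [hT i j k hlt]
    · gcongr
  calc ∑ i, α i * marginalForm T (e i)
      = ∑ i, ∑ j, ∑ k, α i * ‖T (e i) (f j) (g k)‖ ^ 2 := by
        simp only [marginalForm_eq_sum T f g, Finset.mul_sum]
    _ ≤ ∑ i, ∑ j, ∑ k, (β j + γ k) * ‖T (e i) (f j) (g k)‖ ^ 2 := by
        exact Finset.sum_le_sum fun i _ => Finset.sum_le_sum fun j _ => Finset.sum_le_sum fun k _ =>
          hterm i j k
    _ = ∑ i, ∑ j, ∑ k, β j * ‖T (e i) (f j) (g k)‖ ^ 2 +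
          ∑ i, ∑ j, ∑ k, γ k * ‖T (e i) (f j) (g k)‖ ^ 2 := by
        simp only [add_mul, Finset.sum_add_distrib]
    _ = ∑ j, ∑ i, ∑ k, β j * ‖T (e i) (f j) (g k)‖ ^ 2 +
          ∑ k, ∑ i, ∑ j, γ k * ‖T (e i) (f j) (g k)‖ ^ 2 := by
        congr 1
        · exact Finset.sum_comm
        · exact (Finset.sum_congr rfl fun _ _ => Finset.sum_comm).trans Finset.sum_comm
    _ = ∑ j, β j * marginalForm T.flip (f j) + ∑ k, γ k * marginalForm (rotate T) (g k) := by
        simp only [marginalForm_eq_sum T.flip e g, marginalForm_eq_sum (rotate T) e f,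
          Finset.mul_sum, LinearMap.flip_apply, rotate_apply]

end Trilinear

section ThreeDimensional

variable {𝕜 A B C : Type*} [RCLike 𝕜]
  [NormedAddCommGroup A] [InnerProductSpace 𝕜 A]
  [NormedAddCommGroup B] [InnerProductSpace 𝕜 B]
  [NormedAddCommGroup C] [InnerProductSpace 𝕜 C]

theorem exists_norm_eq_one_and_forall_orthogonal_apply_eq_zero [FiniteDimensional 𝕜 A]
    (h : finrank 𝕜 A ≤ finrank 𝕜 C) {u : A} (hu : u ≠ 0)
    (S : A →ₗ[𝕜] C →ₗ[𝕜] 𝕜) :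
    ∃ z, ‖z‖ = 1 ∧ ∀ x, ⟪u, x⟫_𝕜 = 0 → S x z = 0 := by
  have hlt : finrank 𝕜 (Dual 𝕜 (𝕜 ∙ u)ᗮ) < finrank 𝕜 C := by
    have := (𝕜 ∙ u).finrank_add_finrank_orthogonal
    rw [finrank_span_singleton hu] at this
    rw [Subspace.dual_finrank_eq]
    lia
  obtain ⟨z, hz, hSz⟩ :=
    exists_norm_eq_one_and_map_eq_zero ((𝕜 ∙ u)ᗮ.dualRestrict ∘ₗ S.flip) hlt
  refine ⟨z, hz, fun x hx => ?_⟩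
  exact LinearMap.congr_fun hSz ⟨x, Submodule.mem_orthogonal_singleton_iff_inner_right.2 hx⟩

theorem exists_orthonormalBases_apply_eq_zero_of_add_lt (hA : finrank 𝕜 A = 3)
    (hB : finrank 𝕜 B = 3) (hC : finrank 𝕜 C = 3) (T : A →ₗ[𝕜] B →ₗ[𝕜] C →ₗ[𝕜] 𝕜)
    {u : A} (hu : ‖u‖ = 1) {v : B} (hv : ‖v‖ = 1) (w : C) :
    ∃ (e : OrthonormalBasis (Fin 3) 𝕜 A) (f : OrthonormalBasis (Fin 3) 𝕜 B)
      (g : OrthonormalBasis (Fin 3) 𝕜 C), e 0 = u ∧ f 0 = v ∧ ⟪w, g 2⟫_𝕜 = 0 ∧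
        ∀ i j k : Fin 3, (j + k : ℕ) < i → T (e i) (f j) (g k) = 0 := by
  have : FiniteDimensional 𝕜 A := .of_finrank_pos (by lia)
  obtain ⟨g₀, hg₀, hT₀₀⟩ := exists_norm_eq_one_and_forall_orthogonal_apply_eq_zero
    (hA.trans hC.symm).le (norm_ne_zero_iff.1 (hu ▸ one_ne_zero)) (T.flip v)
  obtain ⟨g₂, hg₂, hg₀₂, hwg₂⟩ :=
    exists_norm_eq_one_and_inner_eq_zero_and_map_eq_zero (by lia) g₀ (innerₛₗ 𝕜 w)
  obtain ⟨g, rfl, rfl⟩ := exists_orthonormalBasis_extending_pair (s := (0 : Fin 3)) (t := 2)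
    (by simpa) (by decide) hg₀ hg₂ hg₀₂
  obtain ⟨e₂, he₂, hue₂, hT₂₀₁⟩ :=
    exists_norm_eq_one_and_inner_eq_zero_and_map_eq_zero (by lia) u ((T.flip v).flip (g 1))
  obtain ⟨e, rfl, rfl⟩ := exists_orthonormalBasis_extending_pair (s := (0 : Fin 3)) (t := 2)
    (by simpa) (by decide) hu he₂ hue₂
  obtain ⟨f₁, hf₁, hvf₁, hT₂₁₀⟩ :=
    exists_norm_eq_one_and_inner_eq_zero_and_map_eq_zero (by lia) v ((T (e 2)).flip (g 0))
  obtain ⟨f, rfl, rfl⟩ := exists_orthonormalBasis_extending_pair (s := (0 : Fin 3)) (t := 1)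
    (by simpa) (by decide) hv hf₁ hvf₁
  refine ⟨e, f, g, rfl, rfl, hwg₂, fun i j k hijk => ?_⟩
  have hT₁₀₀ : T (e 1) (f 0) (g 0) = 0 := hT₀₀ (e 1) (by simp [e.inner_eq_ite])
  have hT₂₀₀ : T (e 2) (f 0) (g 0) = 0 := hT₀₀ (e 2) hue₂
  fin_cases i <;> fin_cases j <;> fin_cases k <;> first | assumption | simp_all

theorem two_mul_add_le_of_isDiagonalIn_marginalForm
    [FiniteDimensional 𝕜 A] [FiniteDimensional 𝕜 B] [FiniteDimensional 𝕜 C]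
    {T : A →ₗ[𝕜] B →ₗ[𝕜] C →ₗ[𝕜] 𝕜} {u : OrthonormalBasis (Fin 3) 𝕜 A}
    {v : OrthonormalBasis (Fin 3) 𝕜 B} {w : OrthonormalBasis (Fin 3) 𝕜 C} {a b c : Fin 3 → ℝ}
    (hu : IsDiagonalIn (marginalForm T) u a) (hv : IsDiagonalIn (marginalForm T.flip) v b)
    (hw : IsDiagonalIn (marginalForm (rotate T)) w c)
    (ha : Monotone a) (hb : Monotone b) (hc : Monotone c) :
    2 * a 1 + a 2 ≤ 2 * b 1 + b 0 + 2 * c 1 + c 2 := by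
  obtain ⟨e, f, g, heu, hfv, hwg, hT⟩ := exists_orthonormalBases_apply_eq_zero_of_add_lt
    (finrank_eq_card_basis u.toBasis) (finrank_eq_card_basis v.toBasis)
    (finrank_eq_card_basis w.toBasis) T (u.norm_eq_one 0) (v.norm_eq_one 2) (w 2)
  calc 2 * a 1 + a 2
      ≤ ∑ i : Fin 3, (i : ℝ) * marginalForm T (e i) := hu.le_sum_natCast_mul_of_eq_bot ha heu
    _ ≤ ∑ j : Fin 3, (j : ℝ) * marginalForm T.flip (f j) +
          ∑ k : Fin 3, (k : ℝ) * marginalForm (rotate T) (g k) :=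
        sum_mul_marginalForm_le_of_support fun i j k hijk => hT i j k (mod_cast hijk)
    _ ≤ (2 * b 1 + b 0) + (2 * c 1 + c 2) :=
        add_le_add (hv.sum_natCast_mul_le_of_eq_top hb hfv)
          (hw.sum_natCast_mul_le_of_inner_top_eq_zero hc hwg)
    _ = 2 * b 1 + b 0 + 2 * c 1 + c 2 := (add_assoc _ _ _).symm

end ThreeDimensional

section Overlap

variable {𝕜 ι κ μ : Type*} [RCLike 𝕜] [Fintype ι] [Fintype κ] [Fintype μ]

/-- The overlap `(x, y, z) ↦ ⟪ψ, x ⊗ y ⊗ z⟫` of the state `ψ` with coefficients `c` with product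
vectors, as a trilinear form. It takes the value `conj (c i j k)` on standard basis vectors. -/
noncomputable def overlap (c : ι → κ → μ → 𝕜) :
    EuclideanSpace 𝕜 ι →ₗ[𝕜] EuclideanSpace 𝕜 κ →ₗ[𝕜] EuclideanSpace 𝕜 μ →ₗ[𝕜] 𝕜 :=
  (EuclideanSpace.basisFun ι 𝕜).toBasis.constr 𝕜 fun i =>
    (EuclideanSpace.basisFun κ 𝕜).toBasis.constr 𝕜 fun j =>
      (EuclideanSpace.basisFun μ 𝕜).toBasis.constr 𝕜 fun k => starRingEnd 𝕜 (c i j k)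

theorem overlap_apply_basisFun (c : ι → κ → μ → 𝕜)
    (x : EuclideanSpace 𝕜 ι) (j : κ) (k : μ) :
    overlap c x (EuclideanSpace.basisFun κ 𝕜 j) (EuclideanSpace.basisFun μ 𝕜 k) =
      ∑ i, x i * starRingEnd 𝕜 (c i j k) := by
  classical simp [overlap, Basis.constr_apply_fintype]

theorem flip_overlap (c : ι → κ → μ → 𝕜) :
    (overlap c).flip = overlap fun j i k => c i j k := by
  refine (EuclideanSpace.basisFun κ 𝕜).toBasis.ext fun j =>
    (EuclideanSpace.basisFun ι 𝕜).toBasis.ext fun i => ?_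
  simp only [overlap, LinearMap.flip_apply, Basis.constr_basis]

theorem rotate_overlap (c : ι → κ → μ → 𝕜) :
    rotate (overlap c) = overlap fun k i j => c i j k := by
  refine (EuclideanSpace.basisFun μ 𝕜).toBasis.ext fun k =>
    (EuclideanSpace.basisFun ι 𝕜).toBasis.ext fun i =>
      (EuclideanSpace.basisFun κ 𝕜).toBasis.ext fun j => ?_
  simp only [overlap, rotate_apply, Basis.constr_basis]

end Overlap

theorem marginalForm_overlap (c : Fin 3 → Fin 3 → Fin 3 → ℂ) (x : EuclideanSpace ℂ (Fin 3)) :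
    marginalForm (overlap c) x = RCLike.re ⟪x, Matrix.toEuclideanLin (rho1 c) x⟫_ℂ := by
  have hinner : ⟪x, Matrix.toEuclideanLin (rho1 c) x⟫_ℂ =
      ∑ j, ∑ k, (starRingEnd ℂ) (∑ i, x i * (starRingEnd ℂ) (c i j k)) *
        ∑ i, x i * (starRingEnd ℂ) (c i j k) := by
    simp only [PiLp.inner_apply, RCLike.inner_apply, Matrix.toLpLin_apply, Matrix.mulVec,
      dotProduct, rho1, Matrix.of_apply, map_sum, map_mul, Complex.conj_conj]
    simp only [Fin.sum_univ_three]
    ring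
  rw [marginalForm_eq_sum _ (EuclideanSpace.basisFun (Fin 3) ℂ) (EuclideanSpace.basisFun (Fin 3) ℂ),
    hinner]
  simp only [overlap_apply_basisFun, Complex.conj_mul', RCLike.re_eq_complex_re, Complex.re_sum,
    ← Complex.ofReal_pow, Complex.ofReal_re]

theorem IsOrderedSpectrum.exists_isDiagonalIn {M : Matrix (Fin 3) (Fin 3) ℂ} {l : Fin 3 → ℝ}
    (h : IsOrderedSpectrum M l) : ∃ v : OrthonormalBasis (Fin 3) ℂ (EuclideanSpace ℂ (Fin 3)),
      IsDiagonalIn (fun x => RCLike.re ⟪x, Matrix.toEuclideanLin M x⟫_ℂ) v l := by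
  obtain ⟨-, hM, σ, hσ⟩ := h
  refine ⟨hM.eigenvectorBasis.reindex σ.symm, isDiagonalIn_re_inner_of_apply_eq_smul fun i => ?_⟩
  ext j
  simpa [Matrix.toLpLin_apply, hσ i] using congrFun (hM.mulVec_eigenvectorBasis (σ i)) j

/-- The increasingly ordered spectra of the three reduced density matrices of the (not necessarily
normalized) state `c` are `l₁`, `l₂` and `l₃`. -/
structure HasOrderedSpectra (c : Fin 3 → Fin 3 → Fin 3 → ℂ) (l₁ l₂ l₃ : Fin 3 → ℝ) : Prop where
  fst : IsOrderedSpectrum (rho1 c) l₁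
  snd : IsOrderedSpectrum (rho2 c) l₂
  trd : IsOrderedSpectrum (rho3 c) l₃

namespace HasOrderedSpectra

variable {c : Fin 3 → Fin 3 → Fin 3 → ℂ} {l₁ l₂ l₃ : Fin 3 → ℝ}

theorem swap₁₂ (h : HasOrderedSpectra c l₁ l₂ l₃) :
    HasOrderedSpectra (fun j i k => c i j k) l₂ l₁ l₃ where
  fst := h.snd
  snd := h.fst
  trd := by
    have hrho : rho3 (fun j i k => c i j k) = rho3 c := by
      ext
      simp only [rho3, Matrix.of_apply]
      exact Finset.sum_comm
    exact hrho ▸ h.trd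

theorem swap₂₃ (h : HasOrderedSpectra c l₁ l₂ l₃) :
    HasOrderedSpectra (fun i k j => c i j k) l₁ l₃ l₂ where
  fst := by
    have hrho : rho1 (fun i k j => c i j k) = rho1 c := by
      ext
      simp only [rho1, Matrix.of_apply]
      exact Finset.sum_comm
    exact hrho ▸ h.fst
  snd := h.trd
  trd := h.snd

theorem exists_isDiagonalIn_marginalForm (h : HasOrderedSpectra c l₁ l₂ l₃) :
    ∃ v : OrthonormalBasis (Fin 3) ℂ (EuclideanSpace ℂ (Fin 3)),
      IsDiagonalIn (marginalForm (overlap c)) v l₁ := by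
  simpa only [IsDiagonalIn, marginalForm_overlap] using h.fst.exists_isDiagonalIn

theorem two_mul_add_le (h : HasOrderedSpectra c l₁ l₂ l₃) :
    2 * l₁ 1 + l₁ 2 ≤ 2 * l₂ 1 + l₂ 0 + 2 * l₃ 1 + l₃ 2 := by
  obtain ⟨u, hu⟩ := h.exists_isDiagonalIn_marginalForm
  obtain ⟨v, hv⟩ := h.swap₁₂.exists_isDiagonalIn_marginalForm
  obtain ⟨w, hw⟩ := h.swap₂₃.swap₁₂.exists_isDiagonalIn_marginalForm
  rw [← flip_overlap] at hv
  rw [← rotate_overlap] at hw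
  exact two_mul_add_le_of_isDiagonalIn_marginalForm hu hv hw h.fst.1 h.snd.1 h.trd.1

end HasOrderedSpectra

theorem three_qutrit_ineq6 (c : Fin 3 → Fin 3 → Fin 3 → ℂ)
    (hnorm : ∑ i : Fin 3, ∑ j : Fin 3, ∑ k : Fin 3, ‖c i j k‖ ^ 2 = 1)
    (l : Fin 3 → Fin 3 → ℝ)
    (h1 : IsOrderedSpectrum (rho1 c) (l 0))
    (h2 : IsOrderedSpectrum (rho2 c) (l 1))
    (h3 : IsOrderedSpectrum (rho3 c) (l 2)) :
    ∀ a b c' : Fin 3, a ≠ b → a ≠ c' → b ≠ c' →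
      2 * l a 1 + l a 2 ≤ 2 * l b 1 + l b 0 + 2 * l c' 1 + l c' 2 := by
  have h : HasOrderedSpectra c (l 0) (l 1) (l 2) := ⟨h1, h2, h3⟩
  intro a b c' hab hac hbc
  obtain ⟨d, hd⟩ : ∃ d, HasOrderedSpectra d (l a) (l b) (l c') := by
    fin_cases a <;> fin_cases b <;> fin_cases c' <;> try contradiction
    exacts [⟨_, h⟩, ⟨_, h.swap₂₃⟩, ⟨_, h.swap₁₂⟩, ⟨_, h.swap₁₂.swap₂₃⟩, ⟨_, h.swap₂₃.swap₁₂⟩,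
      ⟨_, h.swap₁₂.swap₂₃.swap₁₂⟩]
  exact hd.two_mul_add_le
end

section
/- For any pure three-qutrit state, with λ_1^{(a)} ≤ λ_2^{(a)} ≤ λ_3^{(a)} the increasingly ordered eigenvalues of the a-th one-particle reduced density matrix, the inequality 2λ_2^{(a)} + λ_3^{(a)} ≤ 2λ_1^{(b)} + λ_2^{(b)} + 2λ_3^{(c)} + λ_2^{(c)} holds for every permutation (a,b,c) of (1,2,3). -/
open scoped BigOperators

/-!
Expand the state in product orthonormal bases `u ⊗ v ⊗ w`, with squared amplitudes `p i j k`. The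
diagonal entries of the three reduced density matrices in the bases `u`, `v`, `w` are the marginals
of `p`. With `v` an eigenbasis of the second matrix and `u 0` a lowest eigenvector of the first,
variational bounds reduce the claim to `∑ a i * p i j k ≤ ∑ (2 - j + k) * p i j k` with
`a = (0, 2, 1)`. Termwise this fails only at `(1, 1, 0)`, `(1, 2, 0)`, `(1, 2, 1)` and `(2, 2, 0)`.
The remaining freedom in `u` and `w` suffices to make those four amplitudes vanish: first choose
`w 0` so that the contraction of the state with `v 2 ⊗ w 0` is a multiple of `u 0`, then `u 1`
orthogonal to `u 0` and to the contraction with `v 1 ⊗ w 0`, and finally `w 1` orthogonal to `w 0`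
and to the contraction with `u 1 ⊗ v 2`.
-/

open Matrix RCLike
open scoped InnerProductSpace

section EigenvectorBasis

variable {𝕜 E : Type*} [RCLike 𝕜] [NormedAddCommGroup E] [InnerProductSpace 𝕜 E]

section Fintype

variable {ι : Type*} [Fintype ι] (e : OrthonormalBasis ι 𝕜 E) (T : E →L[𝕜] E) {l : ι → ℝ}

theorem reApplyInnerSelf_eq_sum_mul_norm_inner_sq (hT : ∀ i, T (e i) = (l i : 𝕜) • e i) (x : E) :
    T.reApplyInnerSelf x = ∑ i, l i * ‖⟪e i, x⟫_𝕜‖ ^ 2 := by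
  have hTx : T x = ∑ i, (⟪e i, x⟫_𝕜 * l i) • e i := by
    conv_lhs => rw [← e.sum_repr' x]
    simp only [map_sum, map_smul, hT, smul_smul]
  have hterm (i : ι) : ⟪(⟪e i, x⟫_𝕜 * l i) • e i, x⟫_𝕜 = ((l i * ‖⟪e i, x⟫_𝕜‖ ^ 2 : ℝ) : 𝕜) := by
    rw [inner_smul_left, map_mul, conj_ofReal, mul_right_comm, RCLike.conj_mul, mul_comm]
    push_cast
    rfl
  simp only [T.reApplyInnerSelf_apply, hTx, sum_inner, hterm, map_sum, ofReal_re]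

theorem mul_norm_sq_le_reApplyInnerSelf (hT : ∀ i, T (e i) = (l i : 𝕜) • e i) {m : ℝ} {x : E}
    (hm : ∀ i, ⟪e i, x⟫_𝕜 ≠ 0 → m ≤ l i) : m * ‖x‖ ^ 2 ≤ T.reApplyInnerSelf x := by
  rw [reApplyInnerSelf_eq_sum_mul_norm_inner_sq e T hT, ← e.sum_sq_norm_inner_right, Finset.mul_sum]
  refine Finset.sum_le_sum fun i _ => ?_
  by_cases hi : ⟪e i, x⟫_𝕜 = 0
  · simp [hi]
  · exact mul_le_mul_of_nonneg_right (hm i hi) (sq_nonneg _)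

theorem reApplyInnerSelf_le_mul_norm_sq (hT : ∀ i, T (e i) = (l i : 𝕜) • e i) {m : ℝ} {x : E}
    (hm : ∀ i, ⟪e i, x⟫_𝕜 ≠ 0 → l i ≤ m) : T.reApplyInnerSelf x ≤ m * ‖x‖ ^ 2 := by
  have hneg := mul_norm_sq_le_reApplyInnerSelf e (-T) (l := -l) (m := -m) (x := x)
    (fun i => by simp [hT]) fun i hi => neg_le_neg (hm i hi)
  simp only [ContinuousLinearMap.reApplyInnerSelf_apply, _root_.neg_apply,
    inner_neg_left, map_neg, neg_mul, neg_le_neg_iff] at hneg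
  exact hneg

theorem reApplyInnerSelf_of_apply_eq_smul {x : E} {r : ℝ} (hx : ‖x‖ = 1)
    (hTx : T x = (r : 𝕜) • x) : T.reApplyInnerSelf x = r := by
  simp [T.reApplyInnerSelf_apply, hTx, inner_smul_left, inner_self_eq_norm_sq_to_K, hx]

theorem sum_reApplyInnerSelf_eq_re_trace :
    ∑ i, T.reApplyInnerSelf (e i) = re (LinearMap.trace 𝕜 E T) := by
  rw [LinearMap.trace_eq_sum_inner _ e, map_sum]
  exact Finset.sum_congr rfl fun i _ => inner_re_symm _ _

theorem sum_reApplyInnerSelf_eq_sum_eigenvalues (hT : ∀ i, T (e i) = (l i : 𝕜) • e i)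
    {κ : Type*} [Fintype κ] (b : OrthonormalBasis κ 𝕜 E) :
    ∑ k, T.reApplyInnerSelf (b k) = ∑ i, l i := by
  rw [sum_reApplyInnerSelf_eq_re_trace, ← sum_reApplyInnerSelf_eq_re_trace e]
  exact Finset.sum_congr rfl fun i _ =>
    reApplyInnerSelf_of_apply_eq_smul T (e.norm_eq_one i) (hT i)

end Fintype

variable (e : OrthonormalBasis (Fin 3) 𝕜 E) (T : E →L[𝕜] E) {l : Fin 3 → ℝ}

theorem two_mul_reApplyInnerSelf_add_le (hl : Monotone l) (hT : ∀ i, T (e i) = (l i : 𝕜) • e i)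
    (b : OrthonormalBasis (Fin 3) 𝕜 E) :
    2 * T.reApplyInnerSelf (b 2) + T.reApplyInnerSelf (b 1) ≤ 2 * l 2 + l 1 := by
  have hsum := sum_reApplyInnerSelf_eq_sum_eigenvalues e T hT b
  have hmin := mul_norm_sq_le_reApplyInnerSelf e T hT (x := b 0) fun i _ => hl (Fin.zero_le i)
  have hmax := reApplyInnerSelf_le_mul_norm_sq e T hT (m := l 2) (x := b 2) fun i _ =>
    hl (Fin.le_last i)
  simp only [b.norm_eq_one, one_pow, mul_one, Fin.sum_univ_three] at hsum hmin hmax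
  linarith

theorem le_two_mul_reApplyInnerSelf_add (hl : Monotone l) (hT : ∀ i, T (e i) = (l i : 𝕜) • e i)
    {b : OrthonormalBasis (Fin 3) 𝕜 E} (hb : b 0 = e 0) :
    2 * l 1 + l 2 ≤ 2 * T.reApplyInnerSelf (b 1) + T.reApplyInnerSelf (b 2) := by
  have hsum := sum_reApplyInnerSelf_eq_sum_eigenvalues e T hT b
  have hzero : T.reApplyInnerSelf (b 0) = l 0 :=
    reApplyInnerSelf_of_apply_eq_smul T (b.norm_eq_one 0) (hb ▸ hT 0)
  have hmin := mul_norm_sq_le_reApplyInnerSelf e T hT (m := l 1) (x := b 1) fun i hi =>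
    hl <| Fin.one_le_of_ne_zero fun h => hi <| by rw [h, ← hb, b.inner_eq_zero (by decide)]
  simp only [b.norm_eq_one, one_pow, mul_one, Fin.sum_univ_three] at hsum hmin
  linarith

end EigenvectorBasis

theorem reApplyInnerSelf_mul_conjTranspose {𝕜 m n : Type*} [RCLike 𝕜] [Fintype m] [DecidableEq m]
    [Fintype n] (A : Matrix m n 𝕜) (x : EuclideanSpace 𝕜 m) :
    (toEuclideanCLM (𝕜 := 𝕜) (A * Aᴴ)).reApplyInnerSelf x = ∑ k, ‖(star x.ofLp ᵥ* A) k‖ ^ 2 := by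
  have hinner : ⟪toEuclideanCLM (𝕜 := 𝕜) (A * Aᴴ) x, x⟫_𝕜 =
      (star x.ofLp ᵥ* A) ⬝ᵥ star (star x.ofLp ᵥ* A) := by
    rw [EuclideanSpace.inner_eq_star_dotProduct, ofLp_toEuclideanCLM, star_mulVec,
      conjTranspose_mul, conjTranspose_conjTranspose, dotProduct_comm, ← vecMul_vecMul,
      ← dotProduct_mulVec, star_vecMul, star_star]
  simp only [ContinuousLinearMap.reApplyInnerSelf_apply, hinner, dotProduct, Pi.star_apply,
    ← starRingEnd_apply, RCLike.mul_conj, map_sum, ← ofReal_pow, ofReal_re]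

theorem IsOrderedSpectrum.exists_eigenvectorBasis {M : Matrix (Fin 3) (Fin 3) ℂ} {l : Fin 3 → ℝ}
    (h : IsOrderedSpectrum M l) :
    ∃ e : OrthonormalBasis (Fin 3) ℂ (EuclideanSpace ℂ (Fin 3)),
      ∀ i, toEuclideanCLM (𝕜 := ℂ) M (e i) = (l i : ℂ) • e i := by
  obtain ⟨-, hM, σ, hl⟩ := h
  refine ⟨hM.eigenvectorBasis.reindex σ.symm, fun i => ?_⟩
  rw [OrthonormalBasis.reindex_apply, Equiv.symm_symm, hl]
  ext k
  simpa using congrFun (hM.mulVec_eigenvectorBasis (σ i)) k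

section Orthogonality

variable {𝕜 E : Type*} [RCLike 𝕜] [NormedAddCommGroup E] [InnerProductSpace 𝕜 E]

theorem exists_norm_eq_one_forall_inner_eq_zero [FiniteDimensional 𝕜 E] (s : Finset E)
    (hs : s.card < Module.finrank 𝕜 E) : ∃ z : E, ‖z‖ = 1 ∧ ∀ x ∈ s, ⟪x, z⟫_𝕜 = 0 := by
  have hne : (Submodule.span 𝕜 (s : Set E))ᗮ ≠ ⊥ := by
    rw [Ne, Submodule.orthogonal_eq_bot_iff]
    intro htop
    have hle := finrank_span_finset_le_card (R := 𝕜) s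
    rw [Set.finrank, htop, finrank_top] at hle
    exact hle.not_gt hs
  obtain ⟨z, hz, hz0⟩ := Submodule.exists_mem_ne_zero_of_ne_bot hne
  refine ⟨((‖z‖⁻¹ : ℝ) : 𝕜) • z, ?_, fun x hx => ?_⟩
  · simpa using norm_smul_inv_norm (𝕜 := 𝕜) hz0
  · rw [inner_smul_right, hz x (Submodule.subset_span hx), mul_zero]

theorem exists_orthonormalBasis_zero_eq_inner_one_eq_zero (hE : Module.finrank 𝕜 E = 3) {x : E}
    (hx : ‖x‖ = 1) (y : E) :
    ∃ b : OrthonormalBasis (Fin 3) 𝕜 E, b 0 = x ∧ ⟪b 1, y⟫_𝕜 = 0 := by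
  classical
  have : FiniteDimensional 𝕜 E := Module.finite_of_finrank_eq_succ hE
  obtain ⟨z, hz, hxyz⟩ := exists_norm_eq_one_forall_inner_eq_zero (𝕜 := 𝕜) {x, y}
    (Finset.card_le_two.trans_lt (by omega))
  have hxz : ⟪x, z⟫_𝕜 = 0 := hxyz x (by simp)
  have horth : Orthonormal 𝕜 (({0, 1} : Set (Fin 3)).domRestrict ![x, z, 0]) := by
    constructor
    · rintro ⟨i, rfl | rfl⟩
      exacts [hx, hz]
    · rintro ⟨i, rfl | rfl⟩ ⟨j, rfl | rfl⟩ hij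
      exacts [absurd rfl hij, hxz, inner_eq_zero_symm.mp hxz, absurd rfl hij]
  obtain ⟨b, hb⟩ := horth.exists_orthonormalBasis_extension_of_card_eq (by simp [hE])
  have hb1 : b 1 = z := hb 1 (by simp)
  exact ⟨b, hb 0 (by simp), hb1 ▸ inner_eq_zero_symm.mp (hxyz y (by simp))⟩

end Orthogonality

section Amplitude

variable {𝕜 ι κ μ : Type*} [RCLike 𝕜] [Fintype ι] [Fintype κ] [Fintype μ]

/-- The partial contraction `⟨v ⊗ w, t⟩` of a tensor over its last two factors, a vector of the
first factor. -/
noncomputable def partialContraction (t : ι → κ → μ → 𝕜) (v : EuclideanSpace 𝕜 κ)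
    (w : EuclideanSpace 𝕜 μ) : EuclideanSpace 𝕜 ι :=
  WithLp.toLp 2 fun i => ∑ j, ∑ k, star (v j) * star (w k) * t i j k

/-- The amplitude `⟨u ⊗ v ⊗ w, t⟩` of a tensor `t` along a product vector; it is conjugate-linear in
`u`, `v` and `w`. -/
noncomputable def amplitude (t : ι → κ → μ → 𝕜) (u : EuclideanSpace 𝕜 ι) (v : EuclideanSpace 𝕜 κ)
    (w : EuclideanSpace 𝕜 μ) : 𝕜 :=
  ⟪u, partialContraction t v w⟫_𝕜

theorem amplitude_eq_sum (t : ι → κ → μ → 𝕜) (u : EuclideanSpace 𝕜 ι) (v : EuclideanSpace 𝕜 κ)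
    (w : EuclideanSpace 𝕜 μ) :
    amplitude t u v w = ∑ i, ∑ j, ∑ k, star (u i) * star (v j) * star (w k) * t i j k := by
  simp only [amplitude, partialContraction, PiLp.inner_apply, RCLike.inner_apply', Finset.mul_sum,
    mul_assoc, starRingEnd_apply]

theorem amplitude_swap (t : ι → κ → μ → 𝕜) (u : EuclideanSpace 𝕜 ι) (v : EuclideanSpace 𝕜 κ)
    (w : EuclideanSpace 𝕜 μ) :
    amplitude (fun j i k => t i j k) v u w = amplitude t u v w := by
  rw [amplitude_eq_sum, amplitude_eq_sum, Finset.sum_comm]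
  refine Finset.sum_congr rfl fun i _ => Finset.sum_congr rfl fun j _ =>
    Finset.sum_congr rfl fun k _ => ?_
  ring

theorem amplitude_rotate (t : ι → κ → μ → 𝕜) (u : EuclideanSpace 𝕜 ι) (v : EuclideanSpace 𝕜 κ)
    (w : EuclideanSpace 𝕜 μ) :
    amplitude (fun k i j => t i j k) w u v = amplitude t u v w := by
  rw [amplitude_eq_sum, amplitude_eq_sum, Finset.sum_comm]
  refine Finset.sum_congr rfl fun i _ => ?_
  rw [Finset.sum_comm]
  refine Finset.sum_congr rfl fun j _ => Finset.sum_congr rfl fun k _ => ?_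
  ring

theorem sum_norm_sq_contract_orthonormalBasis (v : OrthonormalBasis κ 𝕜 (EuclideanSpace 𝕜 κ))
    (w : OrthonormalBasis μ 𝕜 (EuclideanSpace 𝕜 μ)) (x : κ → μ → 𝕜) :
    ∑ j, ∑ k, ‖∑ j', ∑ k', star (v j j') * star (w k k') * x j' k'‖ ^ 2 =
      ∑ j, ∑ k, ‖x j k‖ ^ 2 := by
  have parseval_right (j : κ) : ∑ k, ‖∑ j', ∑ k', star (v j j') * star (w k k') * x j' k'‖ ^ 2 =
      ∑ k', ‖∑ j', star (v j j') * x j' k'‖ ^ 2 := by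
    have h := w.sum_sq_norm_inner_right (WithLp.toLp 2 fun k' => ∑ j', star (v j j') * x j' k')
    simp only [EuclideanSpace.norm_sq_eq, PiLp.inner_apply, RCLike.inner_apply',
      starRingEnd_apply, Finset.mul_sum] at h
    rw [← h]
    refine Finset.sum_congr rfl fun k _ => ?_
    rw [Finset.sum_comm]
    simp only [mul_assoc, mul_left_comm]
  have parseval_left (k : μ) : ∑ j, ‖∑ j', star (v j j') * x j' k‖ ^ 2 = ∑ j, ‖x j k‖ ^ 2 := by
    have h := v.sum_sq_norm_inner_right (WithLp.toLp 2 fun j => x j k)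
    simpa only [EuclideanSpace.norm_sq_eq, PiLp.inner_apply, RCLike.inner_apply',
      starRingEnd_apply] using h
  simp only [parseval_right]
  rw [Finset.sum_comm]
  simp only [parseval_left]
  exact Finset.sum_comm

theorem exists_orthonormalBasis_amplitude_eq_zero (t : Fin 3 → κ → Fin 3 → 𝕜)
    (e : OrthonormalBasis (Fin 3) 𝕜 (EuclideanSpace 𝕜 (Fin 3))) (v₁ v₂ : EuclideanSpace 𝕜 κ) :
    ∃ u w : OrthonormalBasis (Fin 3) 𝕜 (EuclideanSpace 𝕜 (Fin 3)), u 0 = e 0 ∧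
      amplitude t (u 1) v₁ (w 0) = 0 ∧ amplitude t (u 1) v₂ (w 0) = 0 ∧
      amplitude t (u 1) v₂ (w 1) = 0 ∧ amplitude t (u 2) v₂ (w 0) = 0 := by
  classical
  have hdim : Module.finrank 𝕜 (EuclideanSpace 𝕜 (Fin 3)) = 3 := finrank_euclideanSpace_fin
  let z (u : EuclideanSpace 𝕜 (Fin 3)) := partialContraction (fun k i j => t i j k) u v₂
  have hz (u w) : ⟪w, z u⟫_𝕜 = amplitude t u v₂ w := amplitude_rotate t u v₂ w
  obtain ⟨w₀, hw₀, horth⟩ := exists_norm_eq_one_forall_inner_eq_zero (𝕜 := 𝕜) {z (e 1), z (e 2)}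
    (Finset.card_le_two.trans_lt (by omega))
  have h₁ : amplitude t (e 1) v₂ w₀ = 0 := by
    rw [← hz, inner_eq_zero_symm, horth _ (by simp)]
  have h₂ : amplitude t (e 2) v₂ w₀ = 0 := by
    rw [← hz, inner_eq_zero_symm, horth _ (by simp)]
  have hcompl {u : EuclideanSpace 𝕜 (Fin 3)} (hu : ⟪u, e 0⟫_𝕜 = 0) : amplitude t u v₂ w₀ = 0 := by
    rw [amplitude] at h₁ h₂ ⊢
    rw [← e.sum_inner_mul_inner]
    simp only [Fin.sum_univ_three, hu, h₁, h₂, zero_mul, mul_zero, add_zero]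
  obtain ⟨u, hu0, hu1⟩ := exists_orthonormalBasis_zero_eq_inner_one_eq_zero hdim (e.norm_eq_one 0)
    (partialContraction t v₁ w₀)
  obtain ⟨w, rfl, hw1⟩ := exists_orthonormalBasis_zero_eq_inner_one_eq_zero hdim hw₀ (z (u 1))
  exact ⟨u, w, hu0, hu1, hcompl (hu0 ▸ u.inner_eq_zero (by decide)), hz _ _ ▸ hw1,
    hcompl (hu0 ▸ u.inner_eq_zero (by decide))⟩

end Amplitude

section Marginals

theorem sum_mul_marginal_le {ι κ μ : Type*} [Fintype ι] [Fintype κ] [Fintype μ]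
    (a : ι → ℝ) (b : κ → ℝ) (d : μ → ℝ) {p : ι → κ → μ → ℝ} (hp : ∀ i j k, 0 ≤ p i j k)
    (hle : ∀ i j k, p i j k ≠ 0 → a i ≤ b j + d k) :
    ∑ i, a i * ∑ j, ∑ k, p i j k ≤
      ∑ j, b j * ∑ i, ∑ k, p i j k + ∑ k, d k * ∑ i, ∑ j, p i j k := by
  have hterm (i j k) : a i * p i j k ≤ b j * p i j k + d k * p i j k := by
    by_cases hzero : p i j k = 0
    · simp [hzero]
    · rw [← add_mul]
      exact mul_le_mul_of_nonneg_right (hle i j k hzero) (hp i j k)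
  have hmid : ∑ j, b j * ∑ i, ∑ k, p i j k = ∑ i, ∑ j, ∑ k, b j * p i j k := by
    simp only [Finset.mul_sum]
    exact Finset.sum_comm
  have hlast : ∑ k, d k * ∑ i, ∑ j, p i j k = ∑ i, ∑ j, ∑ k, d k * p i j k := by
    simp only [Finset.mul_sum]
    rw [Finset.sum_comm]
    exact Finset.sum_congr rfl fun i _ => Finset.sum_comm
  rw [hmid, hlast]
  simp only [Finset.mul_sum, ← Finset.sum_add_distrib]
  gcongr with i _ j _ k _
  exact hterm i j k

theorem two_mul_marginal_add_le {p : Fin 3 → Fin 3 → Fin 3 → ℝ} (hp : ∀ i j k, 0 ≤ p i j k)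
    (h110 : p 1 1 0 = 0) (h120 : p 1 2 0 = 0) (h121 : p 1 2 1 = 0) (h220 : p 2 2 0 = 0) :
    2 * ∑ j, ∑ k, p 1 j k + ∑ j, ∑ k, p 2 j k ≤
      2 * ∑ i, ∑ k, p i 0 k + ∑ i, ∑ k, p i 1 k + 2 * ∑ i, ∑ j, p i j 2 + ∑ i, ∑ j, p i j 1 := by
  have hle (i j k : Fin 3) (hne : p i j k ≠ 0) :
      (![0, 2, 1] i : ℝ) ≤ ![2, 1, 0] j + ![0, 1, 2] k := by
    fin_cases i <;> fin_cases j <;> fin_cases k <;>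
      first | exact absurd ‹_› hne | norm_num
  have hsum := sum_mul_marginal_le ![0, 2, 1] ![2, 1, 0] ![0, 1, 2] hp hle
  rw [Fin.sum_univ_three, Fin.sum_univ_three (fun j => ![2, 1, 0] j * _),
    Fin.sum_univ_three (fun k => ![0, 1, 2] k * _)] at hsum
  simp only [cons_val] at hsum
  linarith

end Marginals

section ReducedDensityMatrix

variable (t : Fin 3 → Fin 3 → Fin 3 → ℂ)
  (u v w : OrthonormalBasis (Fin 3) ℂ (EuclideanSpace ℂ (Fin 3)))

theorem reApplyInnerSelf_rho1 (x : EuclideanSpace ℂ (Fin 3)) :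
    (toEuclideanCLM (𝕜 := ℂ) (rho1 t)).reApplyInnerSelf x =
      ∑ j, ∑ k, ‖amplitude t x (v j) (w k)‖ ^ 2 := by
  have hcontract (j k) : amplitude t x (v j) (w k) =
      ∑ j', ∑ k', star (v j j') * star (w k k') * ∑ i, star (x i) * t i j' k' := by
    rw [amplitude_eq_sum, Finset.sum_comm]
    refine Finset.sum_congr rfl fun j' _ => ?_
    rw [Finset.sum_comm]
    refine Finset.sum_congr rfl fun k' _ => ?_
    rw [Finset.mul_sum]
    exact Finset.sum_congr rfl fun i _ => by ring
  have hrho : rho1 t = of (fun i (p : Fin 3 × Fin 3) => t i p.1 p.2) *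
      (of fun i (p : Fin 3 × Fin 3) => t i p.1 p.2)ᴴ := by
    ext i i'
    simp [rho1, mul_apply, Fintype.sum_prod_type]
  simp only [hcontract, sum_norm_sq_contract_orthonormalBasis]
  rw [hrho, reApplyInnerSelf_mul_conjTranspose, Fintype.sum_prod_type]
  rfl

theorem reApplyInnerSelf_rho2 (x : EuclideanSpace ℂ (Fin 3)) :
    (toEuclideanCLM (𝕜 := ℂ) (rho2 t)).reApplyInnerSelf x =
      ∑ i, ∑ k, ‖amplitude t (u i) x (w k)‖ ^ 2 := by
  simpa only [amplitude_swap] using! reApplyInnerSelf_rho1 (fun j i k => t i j k) u w x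

theorem reApplyInnerSelf_rho3 (x : EuclideanSpace ℂ (Fin 3)) :
    (toEuclideanCLM (𝕜 := ℂ) (rho3 t)).reApplyInnerSelf x =
      ∑ i, ∑ j, ‖amplitude t (u i) (v j) x‖ ^ 2 := by
  simpa only [amplitude_rotate] using! reApplyInnerSelf_rho1 (fun k i j => t i j k) u v x

theorem two_mul_spectrum_add_le_of_rho {la lb lc : Fin 3 → ℝ} (ha : IsOrderedSpectrum (rho1 t) la)
    (hb : IsOrderedSpectrum (rho2 t) lb) (hc : IsOrderedSpectrum (rho3 t) lc) :
    2 * la 1 + la 2 ≤ 2 * lb 0 + lb 1 + 2 * lc 2 + lc 1 := by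
  obtain ⟨e, he⟩ := ha.exists_eigenvectorBasis
  obtain ⟨v, hv⟩ := hb.exists_eigenvectorBasis
  obtain ⟨g, hg⟩ := hc.exists_eigenvectorBasis
  obtain ⟨u, w, hu, h110, h120, h121, h220⟩ :=
    exists_orthonormalBasis_amplitude_eq_zero t e (v 1) (v 2)
  have hfirst := le_two_mul_reApplyInnerSelf_add e _ ha.1 he hu
  have hsecond (j) := reApplyInnerSelf_of_apply_eq_smul _ (v.norm_eq_one j) (hv j)
  have hthird := two_mul_reApplyInnerSelf_add_le g _ hc.1 hg w
  have hmarg := two_mul_marginal_add_le (p := fun i j k => ‖amplitude t (u i) (v j) (w k)‖ ^ 2)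
    (fun _ _ _ => sq_nonneg _) (by simp [h110]) (by simp [h120]) (by simp [h121]) (by simp [h220])
  simp only [← reApplyInnerSelf_rho1, ← reApplyInnerSelf_rho2, ← reApplyInnerSelf_rho3,
    hsecond] at hmarg
  linarith

theorem rho1_swap_right : rho1 (fun i k j => t i j k) = rho1 t := by
  ext i i'
  simp only [rho1, of_apply]
  exact Finset.sum_comm

/-- The reduced density matrices indexed by the particle. -/
noncomputable def reducedDensityMatrix : Fin 3 → Matrix (Fin 3) (Fin 3) ℂ :=
  ![rho1 t, rho2 t, rho3 t]

theorem exists_rho_eq_reducedDensityMatrix {a b c : Fin 3} (hab : a ≠ b) (hac : a ≠ c)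
    (hbc : b ≠ c) : ∃ s : Fin 3 → Fin 3 → Fin 3 → ℂ, rho1 s = reducedDensityMatrix t a ∧
      rho2 s = reducedDensityMatrix t b ∧ rho3 s = reducedDensityMatrix t c := by
  have h₁ : rho1 (fun i k j => t i j k) = rho1 t := rho1_swap_right t
  have h₂ : rho1 (fun j k i => t i j k) = rho2 t := rho1_swap_right fun j i k => t i j k
  have h₃ : rho1 (fun k j i => t i j k) = rho3 t := rho1_swap_right fun k i j => t i j k
  fin_cases a <;> fin_cases b <;> fin_cases c <;> try contradiction
  · exact ⟨t, rfl, rfl, rfl⟩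
  · exact ⟨fun i k j => t i j k, h₁, rfl, rfl⟩
  · exact ⟨fun j i k => t i j k, rfl, rfl, h₃⟩
  · exact ⟨fun j k i => t i j k, h₂, h₃, rfl⟩
  · exact ⟨fun k i j => t i j k, rfl, h₁, h₂⟩
  · exact ⟨fun k j i => t i j k, h₃, h₂, h₁⟩

end ReducedDensityMatrix

theorem three_qutrit_ineq7_general (c : Fin 3 → Fin 3 → Fin 3 → ℂ)
    (l : Fin 3 → Fin 3 → ℝ)
    (h1 : IsOrderedSpectrum (rho1 c) (l 0))
    (h2 : IsOrderedSpectrum (rho2 c) (l 1))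
    (h3 : IsOrderedSpectrum (rho3 c) (l 2)) :
    ∀ a b c' : Fin 3, a ≠ b → a ≠ c' → b ≠ c' →
      2 * l a 1 + l a 2 ≤ 2 * l b 0 + l b 1 + 2 * l c' 2 + l c' 1 := by
  intro a b c' hab hac hbc
  have hspec (m : Fin 3) : IsOrderedSpectrum (reducedDensityMatrix c m) (l m) := by
    fin_cases m
    exacts [h1, h2, h3]
  obtain ⟨t, ha, hb, hc⟩ := exists_rho_eq_reducedDensityMatrix c hab hac hbc
  exact two_mul_spectrum_add_le_of_rho t (ha ▸ hspec a) (hb ▸ hspec b) (hc ▸ hspec c')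

theorem three_qutrit_ineq7 (c : Fin 3 → Fin 3 → Fin 3 → ℂ)
    (hnorm : ∑ i : Fin 3, ∑ j : Fin 3, ∑ k : Fin 3, ‖c i j k‖ ^ 2 = 1)
    (l : Fin 3 → Fin 3 → ℝ)
    (h1 : IsOrderedSpectrum (rho1 c) (l 0))
    (h2 : IsOrderedSpectrum (rho2 c) (l 1))
    (h3 : IsOrderedSpectrum (rho3 c) (l 2)) :
    ∀ a b c' : Fin 3, a ≠ b → a ≠ c' → b ≠ c' →
      2 * l a 1 + l a 2 ≤ 2 * l b 0 + l b 1 + 2 * l c' 2 + l c' 1 :=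
  three_qutrit_ineq7_general c l h1 h2 h3
end
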